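/- Let M(ζ,z) denote the 2×2 complex matrix with first row (1/v² + y²/v³, −y/v²) and second row (−y/v², 1/v), where v = Im ζ and y = Im z. For every matrix A with integer entries a, b, c, d and determinant ad − bc = 1, every pair of integers (n₁, n₂), and all ζ, z ∈ ℂ with Im ζ > 0, let g(ζ,z) = ((aζ+b)/(cζ+d), (z + n₁ζ + n₂)/(cζ+d)) and let J(ζ,z) be the 2×2 complex matrix with first row (1/(cζ+d)², (n₁(cζ+d) − c(z + n₁ζ + n₂))/(cζ+d)²) and second row (0, 1/(cζ+d)). Then Im of the first coordinate of g(ζ,z) is positive, and J(ζ,z) · M(g(ζ,z)) · J(ζ,z)^* = M(ζ,z), where J^* denotes the conjugate transpose. -/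

import Mathlib

open Complex Matrix

/-- The coefficient matrix of the Kähler metric `η = i∂∂̄(−log v² + y²/v)` on `ℍ⁺ × ℂ`
in the frame `(dζ, dz)`, where `v = Im ζ` and `y = Im z`. -/
noncomputable def etaMatrix (ζ z : ℂ) : Matrix (Fin 2) (Fin 2) ℂ :=
  !![1/((ζ.im : ℂ))^2 + ((z.im : ℂ))^2/((ζ.im : ℂ))^3, -((z.im : ℂ))/((ζ.im : ℂ))^2;
     -((z.im : ℂ))/((ζ.im : ℂ))^2, 1/((ζ.im : ℂ))]

/-- Lemma 2.1: the metric `η` is invariant under the group `𝒢` of transformations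
`g(A,n)·(ζ,z) = ((aζ+b)/(cζ+d), (z+n₁ζ+n₂)/(cζ+d))`, `A ∈ SL₂(ℤ)`, `n ∈ ℤ²`. -/
theorem eta_invariant (a b c d n₁ n₂ : ℤ) (hdet : a * d - b * c = 1)
    (ζ z : ℂ) (hζ : 0 < ζ.im) :
    0 < ((((a : ℂ) * ζ + (b : ℂ)) / ((c : ℂ) * ζ + (d : ℂ)))).im ∧
    (!![1/((c : ℂ) * ζ + (d : ℂ))^2,
        ((n₁ : ℂ) * ((c : ℂ) * ζ + (d : ℂ)) - (c : ℂ) * (z + (n₁ : ℂ) * ζ + (n₂ : ℂ))) /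
          ((c : ℂ) * ζ + (d : ℂ))^2;
        0, 1/((c : ℂ) * ζ + (d : ℂ))]) *
      etaMatrix (((a : ℂ) * ζ + (b : ℂ)) / ((c : ℂ) * ζ + (d : ℂ)))
        ((z + (n₁ : ℂ) * ζ + (n₂ : ℂ)) / ((c : ℂ) * ζ + (d : ℂ))) *
      (!![1/((c : ℂ) * ζ + (d : ℂ))^2,
        ((n₁ : ℂ) * ((c : ℂ) * ζ + (d : ℂ)) - (c : ℂ) * (z + (n₁ : ℂ) * ζ + (n₂ : ℂ))) /
          ((c : ℂ) * ζ + (d : ℂ))^2;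
        0, 1/((c : ℂ) * ζ + (d : ℂ))])ᴴ = etaMatrix ζ z := by
  have hj : (c : ℂ) * ζ + (d : ℂ) ≠ 0 := by
    intro h
    have h1 := congrArg Complex.im h
    have h2 := congrArg Complex.re h
    simp at h1 h2
    rcases h1 with h1 | h1
    · subst h1
      simp at h2
      subst h2
      simp at hdet
    · exact hζ.ne' h1
  have hdetR : (a : ℝ) * d - b * c = 1 := by exact_mod_cast hdet
  have him : ((((a : ℂ) * ζ + (b : ℂ)) / ((c : ℂ) * ζ + (d : ℂ)))).im
      = ζ.im / Complex.normSq ((c : ℂ) * ζ + (d : ℂ)) := by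
    rw [Complex.div_im, ← sub_div]
    congr 1
    simp
    linear_combination ζ.im * hdetR
  have hN : 0 < Complex.normSq ((c : ℂ) * ζ + (d : ℂ)) := Complex.normSq_pos.2 hj
  refine ⟨by rw [him]; positivity, ?_⟩
  have hy : (((z + (n₁ : ℂ) * ζ + (n₂ : ℂ)) / ((c : ℂ) * ζ + (d : ℂ))).im : ℂ)
      = (z.im * ((c : ℂ) * ζ + (d : ℂ)) + ζ.im *
        ((n₁ : ℂ) * ((c : ℂ) * ζ + (d : ℂ)) - (c : ℂ) * (z + (n₁ : ℂ) * ζ + (n₂ : ℂ))))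
        / (Complex.normSq ((c : ℂ) * ζ + (d : ℂ)) : ℂ) := by
    rw [Complex.div_im, ← sub_div, Complex.ofReal_div]
    congr 1
    apply Complex.ext <;> simp <;> ring
  have hK : (ζ.im : ℂ) * (starRingEnd ℂ) ((n₁ : ℂ) * ((c : ℂ) * ζ + (d : ℂ)) - (c : ℂ) * (z + (n₁ : ℂ) * ζ + (n₂ : ℂ)))
      = z.im * ((c : ℂ) * ζ + (d : ℂ)) + ζ.im *
        ((n₁ : ℂ) * ((c : ℂ) * ζ + (d : ℂ)) - (c : ℂ) * (z + (n₁ : ℂ) * ζ + (n₂ : ℂ)))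
        - z.im * (starRingEnd ℂ) ((c : ℂ) * ζ + (d : ℂ)) := by
    apply Complex.ext <;> simp <;> ring
  have hv : (ζ.im : ℂ) ≠ 0 := by exact_mod_cast hζ.ne'
  have hjb : (starRingEnd ℂ) ((c : ℂ) * ζ + (d : ℂ)) ≠ 0 := by simpa only [ne_eq, map_eq_zero] using hj
  unfold etaMatrix
  rw [hy, him, Complex.ofReal_div, ← Complex.mul_conj]
  generalize ((n₁ : ℂ) * ((c : ℂ) * ζ + (d : ℂ)) - (c : ℂ) * (z + (n₁ : ℂ) * ζ + (n₂ : ℂ))) = K at *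
  clear him hN hy
  generalize (c : ℂ) * ζ + (d : ℂ) = j at *
  generalize (ζ.im : ℂ) = v at *
  generalize (z.im : ℂ) = y at *
  have hK' : (starRingEnd ℂ) K = (y * j + v * K - y * (starRingEnd ℂ) j) / v := by
    rw [eq_div_iff hv, ← hK]; ring
  ext p q
  fin_cases p <;> fin_cases q <;>
    simp [Matrix.mul_apply, Fin.sum_univ_two, Matrix.conjTranspose_apply, hK'] <;>
    generalize (starRingEnd ℂ) j = jb at * <;> field_simp <;> ring
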